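/- Let P ⊆ ℤ^n_{≥0} be a polymatroid over [n] with rank function f and let g = Σ_{i∈[n]} f({i}) − f([n]). Then for every integer i with 0 ≤ i < r'_2(P), the coefficient of x^i in the interior polynomial satisfies [x^i]I_P(x) = C(g+i-1, i) − Σ_{j=0}^{i} C(g+i-1-j, i-j)·|C_j(P)|, where C(·,·) denotes the binomial coefficient. -/

import Mathlib

open Finset Polynomial

/-- `f` is the rank function of a polymatroid over the ground set `[n]` (encoded as `Fin n`):
normalization, monotonicity and submodularity. -/
def IsPolymatroidRank (n : ℕ) (f : Finset (Fin n) → ℕ) : Prop :=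
  f ∅ = 0 ∧ (∀ I J : Finset (Fin n), I ⊆ J → f I ≤ f J) ∧
    ∀ I J : Finset (Fin n), f (I ∪ J) + f (I ∩ J) ≤ f I + f J

/-- The set of bases of the polymatroid `P ⊆ ℤ^n_{≥0}` with rank function `f`:
all nonnegative integer vectors `a` with `∑_{i ∈ I} a i ≤ f I` for every `I ⊆ [n]`
and `∑_{i ∈ [n]} a i = f [n]`.  (Every such vector has entries `≤ f [n]`, whence the
bounding box used to produce a `Finset`.) -/
def polyBases (n : ℕ) (f : Finset (Fin n) → ℕ) : Finset (Fin n → ℤ) :=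
  ((Finset.univ : Finset (Fin n → Fin (f Finset.univ + 1))).image
      (fun a i => ((a i : ℕ) : ℤ))).filter
    fun a => (∀ i, 0 ≤ a i) ∧ (∀ I : Finset (Fin n), ∑ i ∈ I, a i ≤ (f I : ℤ)) ∧
      ∑ i, a i = (f Finset.univ : ℤ)

/-- The externally active indices of a basis `a`: those `i` such that
`a + e_i - e_j ∉ P` for every `j < i`. -/
def extAct (n : ℕ) (f : Finset (Fin n) → ℕ) (a : Fin n → ℤ) : Finset (Fin n) :=
  Finset.univ.filter fun i => ∀ j, j < i →
    (fun t => a t + (if t = i then 1 else 0) - (if t = j then 1 else 0)) ∉ polyBases n f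

/-- The internally active indices of a basis `a`: those `i` such that
`a - e_i + e_j ∉ P` for every `j < i`. -/
def intAct (n : ℕ) (f : Finset (Fin n) → ℕ) (a : Fin n → ℤ) : Finset (Fin n) :=
  Finset.univ.filter fun i => ∀ j, j < i →
    (fun t => a t - (if t = i then 1 else 0) + (if t = j then 1 else 0)) ∉ polyBases n f

/-- The exterior polynomial `X_P(y) = ∑_{a ∈ P} y^(n - |Ext(a)|)`. -/
noncomputable def exteriorPoly (n : ℕ) (f : Finset (Fin n) → ℕ) : Polynomial ℤ :=
  ∑ a ∈ polyBases n f, X ^ (n - (extAct n f a).card)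

/-- The interior polynomial `I_P(x) = ∑_{a ∈ P} x^(n - |Int(a)|)`. -/
noncomputable def interiorPoly (n : ℕ) (f : Finset (Fin n) → ℕ) : Polynomial ℤ :=
  ∑ a ∈ polyBases n f, X ^ (n - (intAct n f a).card)

/-- `r_k(P) = min { n - |F| : F ⊆ [n], f F ≤ f [n] - k }` (junk value `0` if no such `F`). -/
noncomputable def rk (n : ℕ) (f : Finset (Fin n) → ℕ) (k : ℕ) : ℕ :=
  sInf {m | ∃ F : Finset (Fin n), (f F : ℤ) ≤ (f Finset.univ : ℤ) - k ∧ m = n - F.card}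

/-- `r'_k(P) = min { |F| : F ⊆ [n], ∑_{i ∈ F} f {i} - f F ≥ k }` (junk value `0` if no such `F`). -/
noncomputable def rk' (n : ℕ) (f : Finset (Fin n) → ℕ) (k : ℕ) : ℕ :=
  sInf {m | ∃ F : Finset (Fin n), (k : ℤ) ≤ (∑ i ∈ F, (f {i} : ℤ)) - (f F : ℤ) ∧ m = F.card}

/-- `H_j(P)`: the flats `H` (i.e. `f (H ∪ {e}) > f H` for all `e ∉ H`) with
`f H = f [n] - 1` and `n - |H| = j`. -/
def Hset (n : ℕ) (f : Finset (Fin n) → ℕ) (j : ℕ) : Finset (Finset (Fin n)) :=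
  Finset.univ.filter fun H =>
    (∀ e, e ∉ H → f H < f (insert e H)) ∧ (f H : ℤ) = (f Finset.univ : ℤ) - 1 ∧
      n - H.card = j

/-- `C_j(P)`: the sets `C` with `|C| = j`, `∑_{i ∈ C} f {i} - f C = 1` and
`∑_{i ∈ C \ {j'}} f {i} = f (C \ {j'})` for every `j' ∈ C`. -/
def Cset (n : ℕ) (f : Finset (Fin n) → ℕ) (j : ℕ) : Finset (Finset (Fin n)) :=
  Finset.univ.filter fun C => C.card = j ∧
    (∑ i ∈ C, (f {i} : ℤ)) - (f C : ℤ) = 1 ∧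
    ∀ j' ∈ C, (∑ i ∈ C.erase j', (f {i} : ℤ)) = (f (C.erase j') : ℤ)

/-- The dual rank function `f*(I) = f([n] \ I) - f([n]) + ∑_{i ∈ I} f {i}`
(the subtraction is exact for a polymatroid rank function). -/
def fdual (n : ℕ) (f : Finset (Fin n) → ℕ) : Finset (Fin n) → ℕ :=
  fun I => f (Finset.univ \ I) + (∑ i ∈ I, f {i}) - f Finset.univ

/-!
Every integer vector `z` lying below some basis lies in exactly one cell
`{z ≤ a, z = a outside Int(a)}` of a basis `a`, namely that of the lexicographically greatest basis
above `z`. Put `z = u - b`, where `u = (f {1}, …, f {n})` and the coordinates of `b` are independent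
geometric random variables with success probability `y` (truncated above `g`, so that only finite
sums occur). The cells are products of rays and points, and the cell of `a` has probability
`(1 - y)^g * y^(n - |Int(a)|)`; hence `u - b` lies below a basis with probability
`(1 - y)^g * I_P(y)`. On the other hand, `u - b` fails to do so when `b` has too small a sum on some
set `I`. If `I` has excess at least `2`, then `|I| ≥ r'_2(P)` and such `b` contribute only multiples
of `y^(r'_2(P))`. Otherwise `b` vanishes on exactly one `C` in one of the families `C_j(P)`, which
has probability `y^|C|`. So `(1 - y)^g * I_P(y) ≡ 1 - ∑_C y^|C|` modulo `y^(r'_2(P))`, and dividing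
by `(1 - y)^g` gives the coefficients.
-/

/-- The integer vectors `z` with `∑_{i ∈ I} z i ≤ f I` for all `I`: for a polymatroid rank function
`f`, those lying coordinatewise below some basis.  Entries may be negative. -/
def IsIndependentVector {n : ℕ} (f : Finset (Fin n) → ℕ) (z : Fin n → ℤ) : Prop :=
  ∀ I : Finset (Fin n), ∑ i ∈ I, z i ≤ f I

instance {n : ℕ} (f : Finset (Fin n) → ℕ) : DecidablePred (IsIndependentVector f) :=
  fun z => inferInstanceAs (Decidable (∀ I : Finset (Fin n), ∑ i ∈ I, z i ≤ f I))

/-- The cell of the basis `a` in the interval decomposition of the independent vectors: the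
vectors below `a` that agree with `a` outside the internally active indices. -/
def intCell (n : ℕ) (f : Finset (Fin n) → ℕ) (a : Fin n → ℤ) : Set (Fin n → ℤ) :=
  {z | z ≤ a ∧ ∀ k ∉ intAct n f a, z k = a k}

/-- The excess `∑_{i ∈ I} f {i} - f I`, which plays the role of the nullity of `I` in a matroid. -/
def excess {n : ℕ} (f : Finset (Fin n) → ℕ) (I : Finset (Fin n)) : ℤ :=
  ∑ i ∈ I, (f {i} : ℤ) - f I

/-- The union of the families `C_j(P)` over all sizes `j`. -/
def excessCircuits {n : ℕ} (f : Finset (Fin n) → ℕ) : Finset (Finset (Fin n)) :=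
  univ.filter fun C => excess f C = 1 ∧ ∀ j ∈ C, excess f (C.erase j) = 0

/-- The vector `u - b`, where `u = (f {1}, …, f {n})` is the least upper bound of the bases. -/
def belowCorner {n : ℕ} (f : Finset (Fin n) → ℕ) (b : Fin n → ℕ) : Fin n → ℤ :=
  fun i => (f {i} : ℤ) - b i

section SumSingle

variable {ι R : Type*} [DecidableEq ι] [Ring R]

lemma sum_add_single (I : Finset ι) (z : ι → R) (j : ι) :
    ∑ t ∈ I, (z + Pi.single j 1 : ι → R) t = ∑ t ∈ I, z t + if j ∈ I then 1 else 0 := by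
  simp only [Pi.add_apply, sum_add_distrib, sum_pi_single']

lemma sum_sub_single_add_single (I : Finset ι) (z : ι → R) (i j : ι) :
    ∑ t ∈ I, (z - Pi.single i 1 + Pi.single j 1 : ι → R) t =
      ∑ t ∈ I, z t - (if i ∈ I then 1 else 0) + if j ∈ I then 1 else 0 := by
  rw [sum_add_single]
  simp only [Pi.sub_apply, sum_sub_distrib, sum_pi_single']

end SumSingle

section Bases

variable {n : ℕ} {f : Finset (Fin n) → ℕ} {a a' z z' : Fin n → ℤ} {I J : Finset (Fin n)}

lemma IsIndependentVector.anti (hz : IsIndependentVector f z) (h : z' ≤ z) :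
    IsIndependentVector f z' :=
  fun I => (sum_le_sum fun i _ => h i).trans (hz I)

lemma isIndependentVector_of_mem_polyBases (ha : a ∈ polyBases n f) : IsIndependentVector f a :=
  (mem_filter.1 ha).2.2.1

lemma sum_eq_of_mem_polyBases (ha : a ∈ polyBases n f) : ∑ i, a i = f univ :=
  (mem_filter.1 ha).2.2.2

lemma IsPolymatroidRank.mem_polyBases_iff (hf : IsPolymatroidRank n f) :
    a ∈ polyBases n f ↔ IsIndependentVector f a ∧ ∑ i, a i = f univ := by
  refine ⟨fun ha => ⟨isIndependentVector_of_mem_polyBases ha, sum_eq_of_mem_polyBases ha⟩, ?_⟩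
  rintro ⟨hind, hsum⟩
  have hnonneg (i : Fin n) : 0 ≤ a i := by
    have hmono : (f (univ.erase i) : ℤ) ≤ f univ := by
      exact_mod_cast hf.2.1 _ _ (erase_subset i univ)
    have hsplit := add_sum_erase univ a (mem_univ i)
    linarith [hind (univ.erase i)]
  have hle (i : Fin n) : a i ≤ f univ :=
    hsum ▸ single_le_sum (fun j _ => hnonneg j) (mem_univ i)
  refine mem_filter.2 ⟨mem_image.2 ⟨fun i => ⟨(a i).toNat, ?_⟩, mem_univ _, ?_⟩,
    hnonneg, hind, hsum⟩
  · have := hle i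
    omega
  · exact funext fun i => Int.toNat_of_nonneg (hnonneg i)

lemma IsPolymatroidRank.tight_union_inter (hf : IsPolymatroidRank n f)
    (hz : IsIndependentVector f z) (hI : ∑ i ∈ I, z i = f I) (hJ : ∑ i ∈ J, z i = f J) :
    ∑ i ∈ I ∪ J, z i = f (I ∪ J) ∧ ∑ i ∈ I ∩ J, z i = f (I ∩ J) := by
  have hsub : (f (I ∪ J) : ℤ) + f (I ∩ J) ≤ f I + f J := by exact_mod_cast hf.2.2 I J
  have hsum := sum_union_inter (s₁ := I) (s₂ := J) (f := z)
  constructor <;> linarith [hz (I ∪ J), hz (I ∩ J)]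

lemma IsIndependentVector.exists_tight_of_not_add_single (hz : IsIndependentVector f z)
    {j : Fin n} (h : ¬ IsIndependentVector f (z + Pi.single j 1)) :
    ∃ I, j ∈ I ∧ ∑ i ∈ I, z i = f I := by
  simp only [IsIndependentVector, sum_add_single, not_forall, not_le] at h
  obtain ⟨I, hI⟩ := h
  have hzI := hz I
  split_ifs at hI with hjI
  · exact ⟨I, hjI, by linarith⟩
  · linarith

lemma IsPolymatroidRank.exists_isIndependentVector_add_single (hf : IsPolymatroidRank n f)
    (hz : IsIndependentVector f z) (hlt : ∑ i, z i < f univ) :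
    ∃ j, IsIndependentVector f (z + Pi.single j 1) := by
  by_contra! hmax
  choose T hmem htight using fun j => hz.exists_tight_of_not_add_single (hmax j)
  have hunion : ∑ i ∈ univ.sup T, z i = f (univ.sup T) :=
    sup_induction (p := fun I => ∑ i ∈ I, z i = f I) (by simp [hf.1])
      (fun _ hI _ hJ => (hf.tight_union_inter hz hI hJ).1) fun j _ => htight j
  have hcover : univ.sup T = univ :=
    eq_univ_of_forall fun j => mem_sup.2 ⟨j, mem_univ j, hmem j⟩
  rw [hcover] at hunion
  exact hlt.ne hunion

lemma IsPolymatroidRank.exists_mem_polyBases_ge (hf : IsPolymatroidRank n f)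
    (hz : IsIndependentVector f z) : ∃ a ∈ polyBases n f, z ≤ a := by
  induction hgap : ((f univ : ℤ) - ∑ i, z i).toNat generalizing z with
  | zero => exact ⟨z, hf.mem_polyBases_iff.2 ⟨hz, le_antisymm (hz univ) (by omega)⟩, le_rfl⟩
  | succ m ih =>
    obtain ⟨j, hj⟩ := hf.exists_isIndependentVector_add_single hz (by omega)
    obtain ⟨a, ha, hle⟩ := ih hj (by rw [sum_add_single, if_pos (mem_univ j)]; omega)
    exact ⟨a, ha, (le_add_of_nonneg_right (Pi.single_nonneg.2 zero_le_one)).trans hle⟩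

lemma IsPolymatroidRank.exists_exchange (hf : IsPolymatroidRank n f)
    (ha : a ∈ polyBases n f) (ha' : a' ∈ polyBases n f) {j : Fin n} (hj : a j < a' j) :
    ∃ k, a' k < a k ∧ a - Pi.single k 1 + Pi.single j 1 ∈ polyBases n f := by
  have hind := isIndependentVector_of_mem_polyBases ha
  have hsum := sum_eq_of_mem_polyBases ha
  -- `k` is taken in the smallest tight set of `a` containing `j`.
  obtain ⟨I, ⟨⟨hjI, htight⟩, hmin⟩⟩ := exists_minimal_of_wellFoundedLT
    (fun I : Finset (Fin n) => j ∈ I ∧ ∑ i ∈ I, a i = f I) ⟨univ, mem_univ j, hsum⟩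
  have hleast {J : Finset (Fin n)} (hjJ : j ∈ J) (hJ : ∑ i ∈ J, a i = f J) : I ⊆ J :=
    (hmin ⟨mem_inter.2 ⟨hjI, hjJ⟩, (hf.tight_union_inter hind htight hJ).2⟩
      inter_subset_left).trans inter_subset_right
  obtain ⟨k, hkI, hk⟩ : ∃ k ∈ I, a' k < a k := by
    by_contra! hle
    have := sum_lt_sum hle ⟨j, hjI, hj⟩
    linarith [isIndependentVector_of_mem_polyBases ha' I]
  refine ⟨k, hk, hf.mem_polyBases_iff.2 ⟨fun J => ?_, ?_⟩⟩
  · rw [sum_sub_single_add_single]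
    have haJ := hind J
    have hstrict (hjJ : j ∈ J) (hkJ : k ∉ J) : ∑ i ∈ J, a i < f J :=
      haJ.lt_of_ne fun h => hkJ (hleast hjJ h hkI)
    split_ifs with hkJ hjJ hjJ <;> grind
  · rw [sum_sub_single_add_single]
    simp [hsum]

end Bases

section IntervalDecomposition

variable {n : ℕ} {f : Finset (Fin n) → ℕ} {a a' z : Fin n → ℤ}

lemma notMem_intAct_iff {i : Fin n} :
    i ∉ intAct n f a ↔ ∃ j < i, a - Pi.single i 1 + Pi.single j 1 ∈ polyBases n f := by
  simp only [intAct, mem_filter_univ, not_forall, not_not, exists_prop, ← Pi.single_apply]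
  rfl

lemma IsPolymatroidRank.toLex_le_of_mem_intCell (hf : IsPolymatroidRank n f)
    (ha : a ∈ polyBases n f) (hz : z ∈ intCell n f a) (ha' : a' ∈ polyBases n f) (hza' : z ≤ a') :
    toLex a' ≤ toLex a := by
  by_contra! hlt
  obtain ⟨j, heq, hj⟩ := hlt
  obtain ⟨k, hk, hexch⟩ := hf.exists_exchange ha ha' hj
  have hjk : j < k := by
    by_contra! hkj
    rcases hkj.eq_or_lt with rfl | hkj
    · exact hk.not_gt hj
    · exact hk.ne' (heq k hkj)
  have hzk : z k = a k := hz.2 k (notMem_intAct_iff.2 ⟨j, hjk, hexch⟩)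
  exact ((hza' k).trans_lt hk).ne hzk

lemma IsPolymatroidRank.exists_mem_intCell (hf : IsPolymatroidRank n f)
    (hz : IsIndependentVector f z) : ∃ a ∈ polyBases n f, z ∈ intCell n f a := by
  classical
  have hne : ((polyBases n f).filter (z ≤ ·)).Nonempty :=
    (hf.exists_mem_polyBases_ge hz).imp fun _ => mem_filter.2
  obtain ⟨a, ha, hmax⟩ := exists_max_image _ toLex hne
  obtain ⟨hab, hza⟩ := mem_filter.1 ha
  refine ⟨a, hab, hza, fun k hk => ?_⟩
  by_contra hne
  obtain ⟨j, hjk, hexch⟩ := notMem_intAct_iff.1 hk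
  have hge : z ≤ a - Pi.single k 1 + Pi.single j 1 := by
    intro t
    have := hza t
    simp only [Pi.add_apply, Pi.sub_apply, Pi.single_apply]
    grind
  refine (hmax _ (mem_filter.2 ⟨hexch, hge⟩)).not_gt ⟨j, fun t ht => ?_, ?_⟩
  · simp [ht.ne, (ht.trans hjk).ne]
  · simp [hjk.ne]

lemma IsPolymatroidRank.eq_of_mem_intCell (hf : IsPolymatroidRank n f) (ha : a ∈ polyBases n f)
    (ha' : a' ∈ polyBases n f) (hz : z ∈ intCell n f a) (hz' : z ∈ intCell n f a') : a = a' :=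
  toLex.injective (le_antisymm (hf.toLex_le_of_mem_intCell ha' hz' ha hz.1)
    (hf.toLex_le_of_mem_intCell ha hz ha' hz'.1))

end IntervalDecomposition

section Excess

variable {n : ℕ} {f : Finset (Fin n) → ℕ} {b : Fin n → ℕ} {C C' I J : Finset (Fin n)}

lemma IsPolymatroidRank.excess_empty (hf : IsPolymatroidRank n f) : excess f ∅ = 0 := by
  simp [excess, hf.1]

lemma excess_univ {g : ℕ} (hg : g + f univ = ∑ i, f {i}) : excess f univ = g := by
  rw [excess, ← Nat.cast_sum, ← hg]
  simp

lemma IsPolymatroidRank.excess_add_excess_le (hf : IsPolymatroidRank n f)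
    (I J : Finset (Fin n)) :
    excess f I + excess f J ≤ excess f (I ∪ J) + excess f (I ∩ J) := by
  have hsub : (f (I ∪ J) : ℤ) + f (I ∩ J) ≤ f I + f J := by exact_mod_cast hf.2.2 I J
  have hsum := sum_union_inter (s₁ := I) (s₂ := J) (f := fun i => (f {i} : ℤ))
  unfold excess
  linarith

lemma IsPolymatroidRank.excess_nonneg (hf : IsPolymatroidRank n f) (I : Finset (Fin n)) :
    0 ≤ excess f I := by
  induction I using Finset.induction_on with
  | empty => exact hf.excess_empty.ge
  | insert x S hx ih =>
    have hsuper := hf.excess_add_excess_le {x} S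
    have hsingle : excess f {x} = 0 := by simp [excess]
    rw [singleton_inter_of_notMem hx, hf.excess_empty, hsingle, ← insert_eq] at hsuper
    linarith

lemma IsPolymatroidRank.excess_mono (hf : IsPolymatroidRank n f) (h : I ⊆ J) :
    excess f I ≤ excess f J := by
  have hsuper := hf.excess_add_excess_le I (J \ I)
  rw [union_sdiff_of_subset h, inter_sdiff_self, hf.excess_empty] at hsuper
  linarith [hf.excess_nonneg (J \ I)]

lemma mem_excessCircuits :
    C ∈ excessCircuits f ↔ excess f C = 1 ∧ ∀ j ∈ C, excess f (C.erase j) = 0 :=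
  mem_filter_univ C

lemma filter_card_excessCircuits (f : Finset (Fin n) → ℕ) (j : ℕ) :
    (excessCircuits f).filter (fun C => #C = j) = Cset n f j := by
  ext C
  simp only [mem_filter, mem_excessCircuits, Cset, mem_univ, true_and, excess, sub_eq_zero]
  exact and_comm

lemma IsPolymatroidRank.excess_eq_zero_of_ssubset (hf : IsPolymatroidRank n f)
    (hC : C ∈ excessCircuits f) (h : I ⊂ C) : excess f I = 0 := by
  obtain ⟨j, hj, hI⟩ := ssubset_iff_exists_subset_erase.1 h
  refine le_antisymm ?_ (hf.excess_nonneg I)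
  exact (hf.excess_mono hI).trans_eq ((mem_excessCircuits.1 hC).2 j hj)

lemma IsPolymatroidRank.two_le_excess_union (hf : IsPolymatroidRank n f)
    (hC : C ∈ excessCircuits f) (hC' : C' ∈ excessCircuits f) (hne : C ≠ C') :
    2 ≤ excess f (C ∪ C') := by
  have hinter : excess f (C ∩ C') = 0 := by
    by_cases hsub : C ⊆ C'
    · exact hf.excess_eq_zero_of_ssubset hC' ((inter_eq_left.2 hsub).symm ▸ hsub.ssubset_of_ne hne)
    · refine hf.excess_eq_zero_of_ssubset hC (inter_subset_left.ssubset_of_ne ?_)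
      exact fun h => hsub (inter_eq_left.1 h)
  have hsuper := hf.excess_add_excess_le C C'
  rw [(mem_excessCircuits.1 hC).1, (mem_excessCircuits.1 hC').1, hinter] at hsuper
  linarith

lemma IsPolymatroidRank.exists_excessCircuit_subset (hf : IsPolymatroidRank n f)
    (hI : excess f I = 1) : ∃ C ∈ excessCircuits f, C ⊆ I := by
  obtain ⟨C, hCI, hC⟩ := exists_minimal_le_of_wellFoundedLT (fun J => 0 < excess f J) I (by omega)
  refine ⟨C, mem_excessCircuits.2 ⟨?_, fun j hj => ?_⟩, hCI⟩
  · have := hf.excess_mono hCI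
    have := hC.prop
    omega
  · exact le_antisymm (not_lt.1 (hC.not_prop_of_lt (erase_ssubset hj))) (hf.excess_nonneg _)

lemma isIndependentVector_belowCorner_iff :
    IsIndependentVector f (belowCorner f b) ↔ ∀ I, excess f I ≤ ∑ i ∈ I, (b i : ℤ) := by
  simp only [IsIndependentVector, belowCorner, excess, sum_sub_distrib, sub_le_comm]

lemma IsPolymatroidRank.card_vanishing_excessCircuits (hf : IsPolymatroidRank n f)
    (hb : ∀ I, ∑ i ∈ I, (b i : ℤ) < excess f I → excess f I ≤ 1) :
    #{C ∈ excessCircuits f | ∀ i ∈ C, b i = 0} =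
      if IsIndependentVector f (belowCorner f b) then 0 else 1 := by
  have hviolated {I : Finset (Fin n)} (hI : 0 < excess f I) (hbI : ∀ i ∈ I, b i = 0) :
      ∑ i ∈ I, (b i : ℤ) < excess f I := by
    rwa [sum_eq_zero fun i hi => by rw [hbI i hi, Nat.cast_zero]]
  have hpos {C : Finset (Fin n)} (hC : C ∈ excessCircuits f) : 0 < excess f C :=
    (mem_excessCircuits.1 hC).1 ▸ one_pos
  split_ifs with hind
  · rw [isIndependentVector_belowCorner_iff] at hind
    simp only [card_eq_zero, filter_eq_empty_iff]
    exact fun C hC hbC => (hviolated (hpos hC) hbC).not_ge (hind C)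
  · simp only [isIndependentVector_belowCorner_iff, not_forall, not_le] at hind
    obtain ⟨I, hI⟩ := hind
    have hnonneg : ∀ i ∈ I, (0 : ℤ) ≤ b i := fun i _ => Int.natCast_nonneg (b i)
    have hsum : ∑ i ∈ I, (b i : ℤ) = 0 := by
      have := sum_nonneg hnonneg
      have := hb I hI
      omega
    have hbI (i : Fin n) (hi : i ∈ I) : b i = 0 := by
      exact_mod_cast (sum_eq_zero_iff_of_nonneg hnonneg).1 hsum i hi
    obtain ⟨C, hC, hCI⟩ := hf.exists_excessCircuit_subset (I := I) (by have := hb I hI; omega)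
    refine card_eq_one.2 ⟨C, eq_singleton_iff_unique_mem.2 ⟨?_, fun C' hC' => ?_⟩⟩
    · exact mem_filter.2 ⟨hC, fun i hi => hbI i (hCI hi)⟩
    · obtain ⟨hC', hbC'⟩ := mem_filter.1 hC'
      by_contra hne
      have htwo := hf.two_le_excess_union hC' hC hne
      have hbunion (i : Fin n) (hi : i ∈ C' ∪ C) : b i = 0 :=
        (mem_union.1 hi).elim (hbC' i) fun hi => hbI i (hCI hi)
      linarith [hb _ (hviolated (by omega) hbunion)]

end Excess

/-- The probability that a geometric random variable with success probability `y`, truncated to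
`{0, …, N}`, takes the value `j ≤ N`, as a polynomial expression in an arbitrary ring element. -/
def truncGeom {R : Type*} [CommRing R] (y : R) (N j : ℕ) : R :=
  if j < N then (1 - y) ^ j * y else (1 - y) ^ N

/-- The joint probability of `b` for independent truncated geometric coordinates. -/
def truncGeomPi {ι R : Type*} [Fintype ι] [CommRing R] (y : R) (N : ℕ) (b : ι → ℕ) : R :=
  ∏ i, truncGeom y N (b i)

/-- The lattice cube `{0, …, N}^ι`, the sample space of `truncGeomPi`. -/
def cube (ι : Type*) [Fintype ι] [DecidableEq ι] (N : ℕ) : Finset (ι → ℕ) :=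
  Fintype.piFinset fun _ => range (N + 1)

section TruncatedGeometric

variable {ι R : Type*} [Fintype ι] [CommRing R] (y : R) {N : ℕ}

lemma sum_Ico_truncGeom {m : ℕ} (h : m ≤ N) :
    ∑ j ∈ Ico m (N + 1), truncGeom y N j = (1 - y) ^ m := by
  induction h using Nat.decreasingInduction with
  | self => simp [truncGeom]
  | of_succ m hm ih =>
    rw [sum_eq_sum_Ico_succ_bot (by omega), ih, truncGeom, if_pos hm]
    ring

lemma pow_card_dvd_truncGeomPi {b : ι → ℕ} {I : Finset ι} (hb : ∀ i ∈ I, b i < N) :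
    y ^ #I ∣ truncGeomPi y N b := by
  rw [← prod_const, truncGeomPi]
  refine Dvd.dvd.trans ?_ (prod_dvd_prod_of_subset I univ _ I.subset_univ)
  refine prod_dvd_prod_of_dvd _ _ fun i hi => ?_
  rw [truncGeom, if_pos (hb i hi)]
  exact dvd_mul_left _ _

variable [DecidableEq ι]

lemma sum_piFinset_truncGeomPi (t : ι → Finset ℕ) :
    ∑ b ∈ Fintype.piFinset t, truncGeomPi y N b = ∏ i, ∑ j ∈ t i, truncGeom y N j :=
  (prod_univ_sum t _).symm

lemma sum_range_truncGeom : ∑ j ∈ range (N + 1), truncGeom y N j = 1 := by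
  rw [range_eq_Ico, sum_Ico_truncGeom y N.zero_le, pow_zero]

lemma sum_cube_truncGeomPi : ∑ b ∈ cube ι N, truncGeomPi y N b = 1 := by
  simp only [cube, sum_piFinset_truncGeomPi, sum_range_truncGeom, prod_const_one]

lemma sum_cube_vanishing_truncGeomPi (hN : 0 < N) (C : Finset ι) :
    ∑ b ∈ cube ι N with ∀ i ∈ C, b i = 0, truncGeomPi y N b = y ^ #C := by
  have hprod : (cube ι N).filter (fun b => ∀ i ∈ C, b i = 0) =
      Fintype.piFinset fun i => if i ∈ C then {0} else range (N + 1) := by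
    ext b
    simp only [cube, mem_filter, Fintype.mem_piFinset, ← forall_and]
    refine forall_congr' fun i => ?_
    split_ifs with hi <;> simp [hi]
    omega
  have hfactor (i : ι) : ∑ j ∈ (if i ∈ C then {0} else range (N + 1)), truncGeom y N j =
      if i ∈ C then y else 1 := by
    split_ifs
    · simp [truncGeom, hN]
    · exact sum_range_truncGeom y
  simp only [hprod, sum_piFinset_truncGeomPi, hfactor, prod_ite_mem, univ_inter, prod_const]

end TruncatedGeometric

/-- The coordinates of `u - a`, where `u = (f {1}, …, f {n})`; the truncation to `ℕ` is harmless
for a basis `a`. -/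
def cornerGap {n : ℕ} (f : Finset (Fin n) → ℕ) (a : Fin n → ℤ) (i : Fin n) : ℕ :=
  ((f {i} : ℤ) - a i).toNat

/-- The vectors `b` of the cube `{0, …, N}^n` for which `u - b` lies in `intCell n f a`. -/
def cubeCell {n : ℕ} (f : Finset (Fin n) → ℕ) (N : ℕ) (a : Fin n → ℤ) : Finset (Fin n → ℕ) :=
  Fintype.piFinset fun i =>
    if i ∈ intAct n f a then Ico (cornerGap f a i) (N + 1) else {cornerGap f a i}

section CubeCells

variable {n : ℕ} {f : Finset (Fin n) → ℕ} {a : Fin n → ℤ} {b : Fin n → ℕ} {g N : ℕ}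

lemma coe_cornerGap (ha : a ∈ polyBases n f) (i : Fin n) :
    (cornerGap f a i : ℤ) = f {i} - a i := by
  have hle := isIndependentVector_of_mem_polyBases ha {i}
  rw [sum_singleton] at hle
  exact Int.toNat_of_nonneg (sub_nonneg.2 hle)

lemma sum_cornerGap (hg : g + f univ = ∑ i, f {i}) (ha : a ∈ polyBases n f) :
    ∑ i, cornerGap f a i = g := by
  zify at hg ⊢
  simp only [coe_cornerGap ha, sum_sub_distrib, sum_eq_of_mem_polyBases ha, ← hg,
    add_sub_cancel_right]

lemma cornerGap_le (hg : g + f univ = ∑ i, f {i}) (ha : a ∈ polyBases n f) (i : Fin n) :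
    cornerGap f a i ≤ g :=
  sum_cornerGap hg ha ▸ single_le_sum (fun _ _ => Nat.zero_le _) (mem_univ i)

lemma mem_cubeCell (hg : g + f univ = ∑ i, f {i}) (hN : g ≤ N) (ha : a ∈ polyBases n f) :
    b ∈ cubeCell f N a ↔ b ∈ cube (Fin n) N ∧ belowCorner f b ∈ intCell n f a := by
  simp only [cubeCell, cube, intCell, Fintype.mem_piFinset, Set.mem_ofPred_eq, Pi.le_def,
    belowCorner, ← forall_and]
  refine forall_congr' fun i => ?_
  have hgap := coe_cornerGap ha i
  have hle := cornerGap_le hg ha i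
  split_ifs with hi
  · simp only [hi, mem_Ico, mem_range, not_true_eq_false, IsEmpty.forall_iff, and_true]
    omega
  · simp only [hi, mem_singleton, mem_range, not_false_eq_true, forall_const]
    omega

lemma sum_cubeCell_truncGeomPi {R : Type*} [CommRing R] (y : R)
    (hg : g + f univ = ∑ i, f {i}) (hN : g < N) (ha : a ∈ polyBases n f) :
    ∑ b ∈ cubeCell f N a, truncGeomPi y N b = (1 - y) ^ g * y ^ (n - #(intAct n f a)) := by
  have hfactor (i : Fin n) :
      ∑ j ∈ (if i ∈ intAct n f a then Ico (cornerGap f a i) (N + 1) else {cornerGap f a i}),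
        truncGeom y N j = (1 - y) ^ cornerGap f a i * if i ∈ (intAct n f a)ᶜ then y else 1 := by
    have hlt := (cornerGap_le hg ha i).trans_lt hN
    simp only [mem_compl]
    split_ifs with hi
    · rw [sum_Ico_truncGeom y hlt.le, mul_one]
    · rw [sum_singleton, truncGeom, if_pos hlt]
  simp only [cubeCell, sum_piFinset_truncGeomPi, hfactor, prod_mul_distrib, prod_pow_eq_pow_sum,
    sum_cornerGap hg ha, prod_ite_mem, univ_inter, prod_const, card_compl, Fintype.card_fin]

lemma IsPolymatroidRank.sum_independent_truncGeomPi {R : Type*} [CommRing R] (y : R)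
    (hf : IsPolymatroidRank n f) (hg : g + f univ = ∑ i, f {i}) (hN : g < N) :
    ∑ b ∈ cube (Fin n) N with IsIndependentVector f (belowCorner f b), truncGeomPi y N b =
      (1 - y) ^ g * ∑ a ∈ polyBases n f, y ^ (n - #(intAct n f a)) := by
  have hpartition : (cube (Fin n) N).filter (fun b => IsIndependentVector f (belowCorner f b)) =
      (polyBases n f).biUnion (cubeCell f N) := by
    ext b
    simp only [mem_filter, mem_biUnion]
    constructor
    · rintro ⟨hb, hind⟩
      obtain ⟨a, ha, hcell⟩ := hf.exists_mem_intCell hind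
      exact ⟨a, ha, (mem_cubeCell hg hN.le ha).2 ⟨hb, hcell⟩⟩
    · rintro ⟨a, ha, hb⟩
      obtain ⟨hcube, hcell⟩ := (mem_cubeCell hg hN.le ha).1 hb
      exact ⟨hcube, (isIndependentVector_of_mem_polyBases ha).anti hcell.1⟩
  have hdisj : (polyBases n f : Set (Fin n → ℤ)).PairwiseDisjoint (cubeCell f N) := by
    refine fun a ha a' ha' hne => disjoint_left.2 fun b hb hb' => hne ?_
    have hcell := ((mem_cubeCell hg hN.le ha).1 hb).2
    have hcell' := ((mem_cubeCell hg hN.le ha').1 hb').2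
    exact hf.eq_of_mem_intCell ha ha' hcell hcell'
  rw [hpartition, sum_biUnion hdisj, mul_sum]
  exact sum_congr rfl fun a ha => sum_cubeCell_truncGeomPi y hg hN ha

end CubeCells

section Truncation

variable {n : ℕ} {f : Finset (Fin n) → ℕ} {g N r : ℕ} {R : Type*} [CommRing R] (y : R)

lemma IsPolymatroidRank.pow_dvd_defect_mul_truncGeomPi (hf : IsPolymatroidRank n f)
    (hg : g + f univ = ∑ i, f {i}) (hN : g ≤ N) (hr : ∀ F, #F < r → excess f F ≤ 1)
    (b : Fin n → ℕ) :
    y ^ r ∣ (1 - (#{C ∈ excessCircuits f | ∀ i ∈ C, b i = 0} : R) -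
      if IsIndependentVector f (belowCorner f b) then 1 else 0) * truncGeomPi y N b := by
  by_cases hb : ∀ I, ∑ i ∈ I, (b i : ℤ) < excess f I → excess f I ≤ 1
  · rw [hf.card_vanishing_excessCircuits hb]
    split_ifs <;> simp
  -- A violated set `I` of excess at least `2` has at least `r` elements, and each of them
  -- contributes a factor `y` to the weight of `b`.
  · push Not at hb
    obtain ⟨I, hlt, hI⟩ := hb
    have hrI : r ≤ #I := not_lt.1 fun h => (hr I h).not_gt hI
    have hbI (i : Fin n) (hi : i ∈ I) : b i < N := by
      have hle : (b i : ℤ) ≤ ∑ i ∈ I, (b i : ℤ) :=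
        single_le_sum (f := fun i => (b i : ℤ)) (fun _ _ => Int.natCast_nonneg _) hi
      have hexcess := (hf.excess_mono I.subset_univ).trans_eq (excess_univ hg)
      omega
    exact ((pow_dvd_pow y hrI).trans (pow_card_dvd_truncGeomPi y hbI)).mul_left _

lemma IsPolymatroidRank.pow_dvd_one_sub_circuits_sub_bases (hf : IsPolymatroidRank n f)
    (hg : g + f univ = ∑ i, f {i}) (hr : ∀ F, #F < r → excess f F ≤ 1) :
    y ^ r ∣ 1 - ∑ C ∈ excessCircuits f, y ^ #C -
      (1 - y) ^ g * ∑ a ∈ polyBases n f, y ^ (n - #(intAct n f a)) := by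
  have hcircuits : ∑ b ∈ cube (Fin n) (g + 1),
      (#{C ∈ excessCircuits f | ∀ i ∈ C, b i = 0} : R) * truncGeomPi y (g + 1) b =
        ∑ C ∈ excessCircuits f, y ^ #C := by
    simp only [card_filter, Nat.cast_sum, Nat.cast_ite, Nat.cast_one, Nat.cast_zero, sum_mul,
      ite_mul, one_mul, zero_mul]
    rw [sum_comm]
    refine sum_congr rfl fun C _ => ?_
    rw [← sum_filter]
    convert sum_cube_vanishing_truncGeomPi y g.succ_pos C
  have htotal : ∑ b ∈ cube (Fin n) (g + 1), truncGeomPi y (g + 1) b = 1 :=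
    sum_cube_truncGeomPi y
  have hindependent := hf.sum_independent_truncGeomPi y hg g.lt_succ_self
  rw [sum_filter] at hindependent
  rw [← hindependent, ← hcircuits, ← htotal, ← sum_sub_distrib, ← sum_sub_distrib]
  refine dvd_sum fun b _ => ?_
  simpa only [sub_mul, one_mul, ite_mul, zero_mul] using
    hf.pow_dvd_defect_mul_truncGeomPi y hg g.le_succ hr b

end Truncation

section Coefficients

lemma coeff_invOneSubPow (R : Type*) [CommRing R] (g i : ℕ) :
    PowerSeries.coeff i (PowerSeries.invOneSubPow R g).val = ((g + i - 1).choose i : R) := by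
  cases g with
  | zero => cases i <;> simp [PowerSeries.invOneSubPow_zero, PowerSeries.coeff_one]
  | succ d =>
    rw [PowerSeries.invOneSubPow_val_succ_eq_mk_add_choose, PowerSeries.coeff_mk,
      Nat.choose_symm_add, show d + 1 + i - 1 = d + i by omega]

lemma coeff_eq_of_X_pow_dvd {R : Type*} [CommRing R] {g i : ℕ} {p q : R[X]}
    (h : X ^ (i + 1) ∣ 1 - q - (1 - X) ^ g * p) :
    p.coeff i = ((g + i - 1).choose i : R) -
      ∑ j ∈ range (i + 1), ((g + i - 1 - j).choose (i - j) : R) * q.coeff j := by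
  set u := PowerSeries.invOneSubPow R g with hu
  have hinv : u.val * (1 - PowerSeries.X) ^ g = 1 := by
    rw [← PowerSeries.invOneSubPow_inv_eq_one_sub_pow]
    exact u.val_inv
  have hdvd : PowerSeries.X ^ (i + 1) ∣
      u.val - (q : PowerSeries R) * u.val - (p : PowerSeries R) := by
    have hcoe := (map_dvd (Polynomial.coeToPowerSeries.ringHom (R := R)) h).mul_left u.val
    simp only [map_sub, map_mul, map_pow, map_one, coeToPowerSeries.ringHom_apply, coe_X] at hcoe
    convert hcoe using 1
    linear_combination (p : PowerSeries R) * hinv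
  have hcoeff := PowerSeries.X_pow_dvd_iff.1 hdvd i i.lt_succ_self
  rw [map_sub, map_sub, coeff_coe, sub_eq_zero] at hcoeff
  rw [← hcoeff, hu, coeff_invOneSubPow, PowerSeries.coeff_mul,
    Nat.sum_antidiagonal_eq_sum_range_succ_mk]
  congr 1
  refine sum_congr rfl fun j hj => ?_
  rw [mem_range] at hj
  rw [coeff_coe, coeff_invOneSubPow, mul_comm, show g + (i - j) - 1 = g + i - 1 - j by omega]

end Coefficients

-- `hi` says that `i < r'_2(P)` with the convention `min ∅ = ∞`; the value of `rk'` is `0` there.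
theorem stmt1_general (n : ℕ) (f : Finset (Fin n) → ℕ) (hf : IsPolymatroidRank n f)
    (g : ℕ) (hg : g + f univ = ∑ i : Fin n, f {i})
    (i : ℕ) (hi : ∀ F, #F ≤ i → excess f F ≤ 1) :
    (interiorPoly n f).coeff i =
      ((g + i - 1).choose i : ℤ) -
        ∑ j ∈ range (i + 1), ((g + i - 1 - j).choose (i - j) : ℤ) * (#(Cset n f j) : ℤ) := by
  have hcircuits (j : ℕ) :
      (∑ C ∈ excessCircuits f, X ^ #C : ℤ[X]).coeff j = #(Cset n f j) := by
    simp only [finsetSum_coeff, coeff_X_pow, eq_comm (a := j), sum_boole,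
      filter_card_excessCircuits]
  have hdvd := hf.pow_dvd_one_sub_circuits_sub_bases (X : ℤ[X]) hg fun F hF =>
    hi F (Nat.lt_succ_iff.1 hF)
  simpa only [interiorPoly, hcircuits] using coeff_eq_of_X_pow_dvd hdvd

/-- For a polymatroid `P ⊆ ℤ^n_{≥0}` with rank function `f`,
`g = ∑_{i ∈ [n]} f {i} - f [n]`, and every `0 ≤ i < r'_2(P)`, the coefficient of `x^i`
in the interior polynomial is
`C(g+i-1, i) - ∑_{j=0}^{i} C(g+i-1-j, i-j) * |C_j(P)|`. -/
theorem stmt1 (n : ℕ) (f : Finset (Fin n) → ℕ) (hf : IsPolymatroidRank n f)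
    (g : ℕ) (hg : g + f Finset.univ = ∑ i : Fin n, f {i})
    (i : ℕ) (hi : i < rk' n f 2) :
    (interiorPoly n f).coeff i =
      ((g + i - 1).choose i : ℤ) -
        ∑ j ∈ Finset.range (i + 1),
          ((g + i - 1 - j).choose (i - j) : ℤ) * ((Cset n f j).card : ℤ) :=
  stmt1_general n f hf g hg i fun _ hF =>
    not_lt.1 fun h => (hF.trans_lt hi).not_ge (Nat.sInf_le ⟨_, h, rfl⟩)
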